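/- arXiv:0705.3932 — 4 statements merged into one kernel-verified Lean document; each statement's English description precedes it below -/
import Mathlib

section
/- Let p be a prime, m ≥ 1 an integer, and q = p^m. Let a, b be integers satisfying |a| ≤ 4√q and 2|a|√q − 2q ≤ b ≤ a²/4 + 2q, and suppose that at least one of the following four conditions holds: (2.1) p does not divide b; (2.2) 2·v_p(b) ≥ m (interpreting v_p(0) = ∞), p does not divide a, and δ := (b+2q)² − 4qa² is either 0 or not a square in the ring ℤ_p of p-adic integers; (2.3) p^m divides b, 2·v_p(a) ≥ m, Δ := a² − 4(b−2q) is a perfect square in ℤ, and, in case m is even (writing a = p^{m/2}·a′ and b = q·b′), one has p ≢ 1 (mod 4) whenever b′ = 2, and p ≢ 1 (mod 3) whenever a′ ≢ b′ (mod 2); (2.4) one of the following rows holds: (a,b) = (0,0) and either (m even and p ≢ 1 mod 8) or (m odd and p ≠ 2); (a,b) = (0,−q) and either (m even and p ≢ 1 mod 12) or (m odd and p ≠ 3); (a,b) = (0,q) and m odd; (a,b) = (0,−2q) and m odd; (a,b) = (0,2q) and m even and p ≡ 1 mod 4; a² = q and b = q and m even and p ≢ 1 mod 5; a² = 2q and b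 = q and m odd and p = 2; a² = 4q and b = 3q and m even and p ≡ 1 mod 3; a² = 5q and b = 3q and m odd and p = 5. Then q² divides 1 + a + b + aq + q² if and only if (q,a,b) is one of the following: (q, 1, −q−2) with q odd and q > 8; (q, 0, −1); (q, −1, q) with m odd or p ≢ 1 (mod 4); (q, −2, 2q+1); (13,9,42); (9,6,20); (7,4,16); (5,3,6); (5,8,26); (4,2,5); (4,4,11); (4,6,17); (3,1,4); (3,3,5); (3,4,10); (2,0,3); (2,1,0); (2,1,4); (2,2,5); (2,3,6). -/
/-!
The real Weil polynomial `h(x) = x² + ax + b - 2q` of the surface has its two real roots in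
`[-2√q, 2√q]`, and `N = 1 + a + b + aq + q²` is `h(q + 1)`. Hence `N > 0`, and nonnegativity of the
discriminant of `h` gives `4N ≤ (2q + 2 + a)²`. Write `N = kq²`. If `k = 1`, this leaves
`-2 ≤ a ≤ 1`, which are the four families; if `k ≥ 2`, then `q ≤ 29`, `0 ≤ a` and `k ≤ 8`, a finite
search. Since `p ∣ N`, the prime `p` cannot divide both `a` and `b`; when it divides `b` only,
condition (2.2) discards the candidates that do not come from an abelian surface.
-/

/-- The inequalities on the coefficients of `X⁴ + aX³ + bX² + aqX + q²` which say that all its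
complex roots have absolute value `√q`, freed from `√q` so that they are decidable: the second and
third fields together express `2|a|√q ≤ b + 2q`. -/
structure WeilBounds (q : ℕ) (a b : ℤ) : Prop where
  sq_le : a ^ 2 ≤ 16 * q
  nonneg : 0 ≤ b + 2 * q
  le_sq : 4 * a ^ 2 * q ≤ (b + 2 * q) ^ 2
  le : 4 * b ≤ a ^ 2 + 8 * q

instance (q : ℕ) (a b : ℤ) : Decidable (WeilBounds q a b) :=
  decidable_of_iff (a ^ 2 ≤ 16 * q ∧ 0 ≤ b + 2 * q ∧ 4 * a ^ 2 * q ≤ (b + 2 * q) ^ 2 ∧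
      4 * b ≤ a ^ 2 + 8 * q)
    ⟨fun ⟨h₁, h₂, h₃, h₄⟩ ↦ ⟨h₁, h₂, h₃, h₄⟩, fun ⟨h₁, h₂, h₃, h₄⟩ ↦ ⟨h₁, h₂, h₃, h₄⟩⟩

theorem weilBounds_iff_sqrt {q : ℕ} {a b : ℤ} :
    WeilBounds q a b ↔ |(a : ℝ)| ≤ 4 * √q ∧ 2 * |(a : ℝ)| * √q - 2 * q ≤ b ∧
      (b : ℝ) ≤ (a : ℝ) ^ 2 / 4 + 2 * q := by
  have hsq : √(q : ℝ) ^ 2 = q := Real.sq_sqrt q.cast_nonneg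
  have hmul : (2 * |(a : ℝ)| * √q) ^ 2 = 4 * a ^ 2 * q := by
    rw [mul_pow, mul_pow, hsq, sq_abs]; norm_num
  have hnn : 0 ≤ 2 * |(a : ℝ)| * √q := by positivity
  constructor
  · rintro ⟨h₁, h₂, h₃, h₄⟩
    rify at h₁ h₂ h₃ h₄
    refine ⟨abs_le_of_sq_le_sq (by linarith [mul_pow 4 (√(q : ℝ)) 2]) (by positivity), ?_,
      by linarith⟩
    linarith [(sq_le_sq₀ hnn h₂).mp (hmul.trans_le h₃)]
  · rintro ⟨h₁, h₂, h₃⟩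
    have h₁_sq : (a : ℝ) ^ 2 ≤ (4 * √q) ^ 2 := sq_le_sq.mpr (h₁.trans (le_abs_self _))
    constructor <;> rify
    · linarith [mul_pow 4 (√(q : ℝ)) 2]
    · linarith
    · exact hmul ▸ pow_le_pow_left₀ hnn (by linarith) 2
    · linarith

namespace WeilBounds

variable {q : ℕ} {a b k : ℤ}

theorem two_mul_add_nonneg (h : WeilBounds q a b) : 0 ≤ 2 * (q : ℤ) + 2 + a := by
  have habs : |a| ≤ 2 * q + 2 :=
    abs_le_of_sq_le_sq (h.sq_le.trans (by linarith [sq_nonneg ((q : ℤ) - 1)])) (by positivity)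
  linarith [neg_abs_le a]

theorem four_mul_eval_one_le (h : WeilBounds q a b) :
    4 * (1 + a + b + a * q + q ^ 2) ≤ (2 * q + 2 + a) ^ 2 := by
  linarith [h.le]

theorem eval_one_pos (h : WeilBounds q a b) (hq : 1 < q) : 0 < 1 + a + b + a * q + (q : ℤ) ^ 2 := by
  obtain ⟨ha, hb, -⟩ := weilBounds_iff_sqrt.mp h
  set s := √(q : ℝ)
  have hs : s ^ 2 = q := Real.sq_sqrt q.cast_nonneg
  have hs_one : 1 < s := Real.lt_sqrt_of_sq_lt (by exact_mod_cast (one_pow 2).trans_lt hq)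
  have h_two_s : 0 ≤ b + 2 * s ^ 2 + 2 * a * s := by
    nlinarith [neg_abs_le (a : ℝ)]
  have h_vertex : 0 < (s + 1) ^ 2 + a := by
    nlinarith [neg_abs_le (a : ℝ), sq_pos_of_pos (sub_pos.mpr hs_one)]
  rify
  calc (0 : ℝ) < (s - 1) ^ 2 * ((s + 1) ^ 2 + a) + (b + 2 * s ^ 2 + 2 * a * s) := by
        have : 0 < (s - 1) ^ 2 := sq_pos_of_pos (sub_pos.mpr hs_one)
        positivity
    _ = 1 + a + b + a * q + q ^ 2 := by rw [← hs]; ring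

theorem of_eval_one_eq_sq (h : WeilBounds q a b) (hq : 1 < q)
    (hN : 1 + a + b + a * q + (q : ℤ) ^ 2 = q ^ 2) :
    (a = 1 ∧ b = -(q : ℤ) - 2 ∧ 8 ≤ q) ∨ (a = 0 ∧ b = -1) ∨ (a = -1 ∧ b = q) ∨
      (a = -2 ∧ b = 2 * (q : ℤ) + 1) := by
  have hb : b = -1 - a - a * q := by linarith
  have ha_ge : -2 ≤ a := by
    have := abs_le_of_sq_le_sq
      (by linarith [h.four_mul_eval_one_le] : (2 * (q : ℤ)) ^ 2 ≤ _) h.two_mul_add_nonneg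
    linarith [le_abs_self (2 * (q : ℤ))]
  have ha_lt : a < 2 := by nlinarith [h.nonneg]
  obtain rfl | rfl | rfl | rfl : a = -2 ∨ a = -1 ∨ a = 0 ∨ a = 1 := by omega
  · exact .inr <| .inr <| .inr ⟨rfl, by linarith⟩
  · exact .inr <| .inr <| .inl ⟨rfl, by linarith⟩
  · exact .inr <| .inl ⟨rfl, by linarith⟩
  · obtain rfl : b = -q - 2 := by linarith
    refine .inl ⟨rfl, rfl, ?_⟩
    by_contra! hlt
    nlinarith [h.le_sq]

theorem nonneg_of_two_le_cofactor (h : WeilBounds q a b) (hq : 1 < q) (hk : 2 ≤ k)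
    (hN : 1 + a + b + a * q + (q : ℤ) ^ 2 = k * q ^ 2) : 0 ≤ a := by
  by_contra! ha
  have hsq : (2 * (q : ℤ) + 2 + a) ^ 2 ≤ (2 * q + 1) ^ 2 :=
    pow_le_pow_left₀ h.two_mul_add_nonneg (by linarith) 2
  nlinarith [h.four_mul_eval_one_le]

theorem le_of_two_le_cofactor (h : WeilBounds q a b) (hk : 2 ≤ k)
    (hN : 1 + a + b + a * q + (q : ℤ) ^ 2 = k * q ^ 2) : q ≤ 29 := by
  by_contra! hq
  -- `14 / 5 < √8`
  have h_sqrt_eight : 14 * (q : ℤ) ≤ 5 * (2 * q + 2 + a) := by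
    refine le_of_sq_le_sq ?_ (by linarith [h.two_mul_add_nonneg])
    nlinarith [h.four_mul_eval_one_le]
  nlinarith [h.sq_le]

theorem cofactor_le (h : WeilBounds q a b) (hq : 1 < q)
    (hN : 1 + a + b + a * q + (q : ℤ) ^ 2 = k * q ^ 2) : k ≤ 8 := by
  by_contra! hk
  have h_sqrt_k : 6 * (q : ℤ) ≤ 2 * q + 2 + a := by
    refine le_of_sq_le_sq ?_ h.two_mul_add_nonneg
    nlinarith [h.four_mul_eval_one_le]
  nlinarith [h.sq_le]

end WeilBounds

/-- The triples `(q, a, b)` of the classification outside the infinite families. -/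
def sporadicTriples : List (ℕ × ℤ × ℤ) :=
  [(13, 9, 42), (9, 6, 20), (7, 4, 16), (5, 3, 6), (5, 8, 26), (4, 2, 5), (4, 4, 11), (4, 6, 17),
    (3, 1, 4), (3, 3, 5), (3, 4, 10), (2, 0, 3), (2, 1, 0), (2, 1, 4), (2, 2, 5), (2, 3, 6)]

theorem sq_dvd_eval_one_of_mem_sporadicTriples :
    ∀ t ∈ sporadicTriples, (t.1 : ℤ) ^ 2 ∣ 1 + t.2.1 + t.2.2 + t.2.1 * t.1 + (t.1 : ℤ) ^ 2 := by
  decide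

-- The third component is the `b` for which `1 + a + b + aq + q² = kq²`.
theorem mem_sporadicTriples_of_mem_Icc :
    ∀ q ∈ Finset.Icc 2 29, ¬ 6 ∣ q → ∀ a ∈ Finset.Icc (0 : ℤ) 21, ∀ k ∈ Finset.Icc (2 : ℤ) 8,
      WeilBounds q a ((k - 1) * q ^ 2 - 1 - a - a * q) →
        (q, a, (k - 1) * (q : ℤ) ^ 2 - 1 - a - a * q) ∈ (8, 5, 18) :: sporadicTriples := by
  decide +kernel

theorem WeilBounds.mem_sporadicTriples {q : ℕ} {a b k : ℤ} (h : WeilBounds q a b) (hq : 1 < q)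
    (hq_six : ¬ 6 ∣ q) (hk : 2 ≤ k) (hN : 1 + a + b + a * q + (q : ℤ) ^ 2 = k * q ^ 2) :
    (q, a, b) ∈ (8, 5, 18) :: sporadicTriples := by
  have hq_le := h.le_of_two_le_cofactor hk hN
  have ha_le : a ≤ 21 := by nlinarith [h.sq_le]
  obtain rfl : b = (k - 1) * q ^ 2 - 1 - a - a * q := by linarith
  exact mem_sporadicTriples_of_mem_Icc q (Finset.mem_Icc.mpr ⟨hq, hq_le⟩) hq_six
    a (Finset.mem_Icc.mpr ⟨h.nonneg_of_two_le_cofactor hq hk hN, ha_le⟩)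
    k (Finset.mem_Icc.mpr ⟨hk, h.cofactor_le hq hN⟩) h

theorem isSquare_of_sq_sub_mem {R : Type*} [CommRing R] (I : Ideal R) [HenselianRing R I] {r c : R}
    (hr : IsUnit (2 * r)) (hrc : r ^ 2 - c ∈ I) : IsSquare c := by
  obtain ⟨z, hz, -⟩ := HenselianRing.is_henselian (I := I)
    (Polynomial.X ^ 2 - Polynomial.C c) (Polynomial.monic_X_pow_sub_C c two_ne_zero) r
    (by simpa using hrc) (by simpa [one_add_one_eq_two] using hr.map (Ideal.Quotient.mk I))
  exact ⟨z, by simpa [Polynomial.IsRoot, sub_eq_zero, sq, eq_comm] using hz⟩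

section PrimePower

open IsLocalRing

variable {p m q : ℕ} [hp : Fact p.Prime]

theorem isUnit_iff_toZMod_ne_zero {x : ℤ_[p]} : IsUnit x ↔ PadicInt.toZMod x ≠ 0 := by
  rw [← notMem_maximalIdeal, ← PadicInt.ker_toZMod, RingHom.mem_ker]

theorem isSquare_of_isSquare_toZMod (h_two : (2 : ZMod p) ≠ 0) {c : ℤ_[p]}
    (hc : PadicInt.toZMod c ≠ 0) (h : IsSquare (PadicInt.toZMod c)) : IsSquare c := by
  obtain ⟨y, hy⟩ := h
  obtain ⟨r, rfl⟩ := ZMod.ringHom_surjective PadicInt.toZMod y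
  refine isSquare_of_sq_sub_mem (maximalIdeal ℤ_[p]) (r := r) ?_ ?_
  · rw [isUnit_iff_toZMod_ne_zero, map_mul, map_ofNat]
    exact mul_ne_zero h_two (left_ne_zero_of_mul (hy ▸ hc))
  · rw [← PadicInt.ker_toZMod, RingHom.mem_ker, map_sub, map_pow, hy, sq, sub_self]

-- With `b = qc`, the number in question is `q (q (c + 2)² - 4a²)`, and the second factor is
-- `-(2a)²` modulo `p`.
theorem isSquare_delta_of_even (hm : m ≠ 0) (hq : q = p ^ m) (hm_even : Even m)
    (hp_four : p % 4 = 1) {a b : ℤ} (ha : ¬ (p : ℤ) ∣ a) (hb : (q : ℤ) ∣ b) :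
    IsSquare (((b + 2 * q) ^ 2 - 4 * q * a ^ 2 : ℤ) : ℤ_[p]) := by
  obtain ⟨c, rfl⟩ := hb
  have h_two : (2 : ZMod p) ≠ 0 := Ring.two_ne_zero (by rw [ZMod.ringChar_zmod_n]; omega)
  have ha_ne : (a : ZMod p) ≠ 0 := mt (ZMod.intCast_zmod_eq_zero_iff_dvd a p).mp ha
  have hq_zero : (q : ZMod p) = 0 := by simp [hq, hm]
  set d : ℤ := q * (c + 2) ^ 2 - 4 * a ^ 2
  have hd : PadicInt.toZMod (d : ℤ_[p]) = -1 * (2 * a) ^ 2 := by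
    rw [map_intCast]
    push_cast [d, hq_zero]
    ring
  have hd_square : IsSquare (d : ℤ_[p]) := by
    apply isSquare_of_isSquare_toZMod h_two <;> rw [hd]
    · simp [h_two, ha_ne]
    · exact (ZMod.exists_sq_eq_neg_one_iff.mpr (by omega)).mul (IsSquare.sq _)
  have h_factor : (q * c + 2 * (q : ℤ)) ^ 2 - 4 * q * a ^ 2 = q * d := by ring
  rw [h_factor, Int.cast_mul]
  exact .mul (by simpa [hq] using hm_even.isSquare_pow (p : ℤ_[p])) hd_square

theorem odd_or_mod_four_ne_one (hm : m ≠ 0) (hq : q = p ^ m)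
    (hδ : ((q : ℤ) + 2 * q) ^ 2 - 4 * q * (-1) ^ 2 = 0 ∨
      ¬ IsSquare ((((q : ℤ) + 2 * q) ^ 2 - 4 * q * (-1) ^ 2 : ℤ) : ℤ_[p])) :
    Odd m ∨ p % 4 ≠ 1 := by
  by_contra! ⟨hm_even, hp_four⟩
  refine hδ.elim (fun h_zero ↦ ?_) fun h_not ↦ h_not ?_
  · have hq_pos : 0 < (q : ℤ) := by exact_mod_cast hq ▸ pow_pos hp.out.pos m
    nlinarith
  · have h_unit : ¬ (p : ℤ) ∣ -1 := by
      simpa [Int.natCast_dvd] using hp.out.ne_one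
    exact isSquare_delta_of_even hm hq (Nat.not_odd_iff_even.mp hm_even) hp_four h_unit dvd_rfl

theorem odd_of_dvd_imp_dvd_sq (hq : q = p ^ m) (hq_four : 4 < q)
    (h : (p : ℤ) ∣ -q - 2 → (q : ℤ) ∣ (-q - 2) ^ 2) : Odd q := by
  by_contra h_odd
  have hq_even : 2 ∣ q := (Nat.not_odd_iff_even.mp h_odd).two_dvd
  obtain rfl : 2 = p := Nat.prime_eq_prime_of_dvd_pow Nat.prime_two hp.out (hq ▸ hq_even)
  have hq_dvd : (q : ℤ) ∣ q * (q + 4) + 4 := by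
    convert h (by omega) using 1
    ring
  have hq_le : (q : ℤ) ≤ 4 :=
    Int.le_of_dvd (by norm_num) ((Int.dvd_add_right (dvd_mul_right _ _)).mp hq_dvd)
  omega

theorem not_six_dvd_prime_pow : ¬ 6 ∣ p ^ m := by
  intro h
  have h_two := Nat.prime_eq_prime_of_dvd_pow Nat.prime_two hp.out (dvd_trans (by norm_num) h)
  have h_three := Nat.prime_eq_prime_of_dvd_pow Nat.prime_three hp.out (dvd_trans (by norm_num) h)
  omega

theorem not_dvd_of_dvd_eval_one {q a b : ℤ} (hq : (p : ℤ) ∣ q)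
    (hN : (p : ℤ) ∣ 1 + a + b + a * q + q ^ 2) (hb : (p : ℤ) ∣ b) : ¬ (p : ℤ) ∣ a := by
  intro ha
  have h_one : (p : ℤ) ∣ 1 := by
    have h_rest := ((ha.add hb).add (ha.mul_right q)).add (dvd_pow hq two_ne_zero)
    exact (dvd_add_left h_rest).mp (by simpa only [add_assoc] using hN)
  exact (Nat.prime_iff_prime_int.mp hp.out).not_dvd_one h_one

theorem dvd_of_pow_dvd_sq (hm : m ≠ 0) {a : ℤ} (h : (p : ℤ) ^ m ∣ a ^ 2) : (p : ℤ) ∣ a :=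
  (Nat.prime_iff_prime_int.mp hp.out).dvd_of_dvd_pow ((dvd_pow_self _ hm).trans h)

theorem family_of_eval_one_eq_sq (hm : m ≠ 0) (hq : q = p ^ m) {a b : ℤ} (h : WeilBounds q a b)
    (hcond : (p : ℤ) ∣ b → (q : ℤ) ∣ b ^ 2 ∧
      ((b + 2 * (q : ℤ)) ^ 2 - 4 * (q : ℤ) * a ^ 2 = 0 ∨
        ¬ IsSquare (((b + 2 * (q : ℤ)) ^ 2 - 4 * (q : ℤ) * a ^ 2 : ℤ) : ℤ_[p])))
    (hN : 1 + a + b + a * q + (q : ℤ) ^ 2 = q ^ 2) :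
    (a = 1 ∧ b = -(q : ℤ) - 2 ∧ Odd q ∧ 8 < q) ∨ (a = 0 ∧ b = -1) ∨
      (a = -1 ∧ b = (q : ℤ) ∧ (Odd m ∨ p % 4 ≠ 1)) ∨ (a = -2 ∧ b = 2 * (q : ℤ) + 1) := by
  have hq_one : 1 < q := hq ▸ Nat.one_lt_pow hm hp.out.one_lt
  have hpq : (p : ℤ) ∣ q := by exact_mod_cast hq ▸ dvd_pow_self p hm
  rcases h.of_eval_one_eq_sq hq_one hN with
    ⟨rfl, rfl, hq_eight⟩ | h_zero | ⟨rfl, rfl⟩ | h_neg_two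
  · have h_odd : Odd q := odd_of_dvd_imp_dvd_sq hq (by omega) fun hb ↦ (hcond hb).1
    exact .inl ⟨rfl, rfl, h_odd, by grind⟩
  · exact .inr <| .inl h_zero
  · exact .inr <| .inr <| .inl ⟨rfl, rfl, odd_or_mod_four_ne_one hm hq (hcond hpq).2⟩
  · exact .inr <| .inr <| .inr h_neg_two

theorem WeilBounds.mem_sporadicTriples_of_prime_pow (hm : m ≠ 0) (hq : q = p ^ m) {a b k : ℤ}
    (h : WeilBounds q a b) (hcond : (p : ℤ) ∣ b → (q : ℤ) ∣ b ^ 2) (hk : 2 ≤ k)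
    (hN : 1 + a + b + a * q + (q : ℤ) ^ 2 = k * q ^ 2) : (q, a, b) ∈ sporadicTriples := by
  have hq_one : 1 < q := hq ▸ Nat.one_lt_pow hm hp.out.one_lt
  have h_mem := h.mem_sporadicTriples hq_one (hq ▸ not_six_dvd_prime_pow) hk hN
  refine (List.mem_cons.mp h_mem).resolve_left fun h_eq ↦ ?_
  obtain ⟨rfl, rfl, rfl⟩ : q = 8 ∧ a = 5 ∧ b = 18 := by simpa using h_eq
  have hp_eight : p ∣ 2 ^ 3 := (dvd_pow_self p hm).trans hq.symm.dvd
  have hp_two : p ∣ 2 := hp.out.dvd_of_dvd_pow hp_eight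
  have h_sq := hcond (Int.natCast_dvd_natCast.mpr (hp_two.trans (by norm_num : 2 ∣ 18)))
  norm_num at h_sq

end PrimePower

theorem stmt_0_general {p m q : ℕ} [hp : Fact p.Prime] (hm : m ≠ 0) (hq : q = p ^ m) {a b : ℤ}
    (h : WeilBounds q a b)
    (hcond : ¬ (p : ℤ) ∣ b ∨
      ((q : ℤ) ∣ b ^ 2 ∧ ((b + 2 * (q : ℤ)) ^ 2 - 4 * (q : ℤ) * a ^ 2 = 0 ∨
        ¬ IsSquare (((b + 2 * (q : ℤ)) ^ 2 - 4 * (q : ℤ) * a ^ 2 : ℤ) : ℤ_[p]))) ∨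
      (p : ℤ) ∣ a) :
    (q : ℤ) ^ 2 ∣ 1 + a + b + a * (q : ℤ) + (q : ℤ) ^ 2 ↔
      ((a = 1 ∧ b = -(q : ℤ) - 2 ∧ Odd q ∧ 8 < q) ∨
       (a = 0 ∧ b = -1) ∨
       (a = -1 ∧ b = (q : ℤ) ∧ (Odd m ∨ p % 4 ≠ 1)) ∨
       (a = -2 ∧ b = 2 * (q : ℤ) + 1)) ∨
      (q, a, b) ∈ sporadicTriples := by
  have hq_one : 1 < q := hq ▸ Nat.one_lt_pow hm hp.out.one_lt
  have hpq : (p : ℤ) ∣ q := by exact_mod_cast hq ▸ dvd_pow_self p hm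
  constructor
  · rintro ⟨k, hk⟩
    rw [mul_comm _ k] at hk
    have hpN : (p : ℤ) ∣ 1 + a + b + a * q + q ^ 2 := hk ▸ (dvd_pow hpq two_ne_zero).mul_left k
    have h_ordinary (hb : (p : ℤ) ∣ b) := (hcond.resolve_left (not_not.mpr hb)).resolve_right
      (not_dvd_of_dvd_eval_one hpq hpN hb)
    have hk_pos : 0 < k := pos_of_mul_pos_left (hk ▸ h.eval_one_pos hq_one) (sq_nonneg _)
    obtain rfl | hk_two : k = 1 ∨ 2 ≤ k := by omega
    · exact .inl (family_of_eval_one_eq_sq hm hq h h_ordinary (hk.trans (one_mul _)))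
    · exact .inr (h.mem_sporadicTriples_of_prime_pow hm hq (fun hb ↦ (h_ordinary hb).1) hk_two hk)
  · rintro ((⟨rfl, rfl, -⟩ | ⟨rfl, rfl⟩ | ⟨rfl, rfl, -⟩ | ⟨rfl, rfl⟩) | h_mem)
    iterate 4 exact ⟨1, by ring⟩
    exact sq_dvd_eval_one_of_mem_sporadicTriples _ h_mem

/-- classification of the Weil polynomial data (q, a, b), where
q = p^m is a prime power and a, b are integers satisfying the coefficient
bounds |a| ≤ 4√q and 2|a|√q − 2q ≤ b ≤ a²/4 + 2q together with one of the
conditions (2.1)–(2.4), for which q² divides 1 + a + b + aq + q².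
Here the condition 2·v_p(b) ≥ m (with v_p(0) = ∞) is encoded as p^m ∣ b², and
similarly 2·v_p(a) ≥ m is encoded as p^m ∣ a². -/
theorem stmt_0 (p m : ℕ) [hp : Fact p.Prime] (hm : 1 ≤ m) (q : ℕ) (hq : q = p ^ m)
    (a b : ℤ)
    (hbound1 : ((|a| : ℤ) : ℝ) ≤ 4 * Real.sqrt q)
    (hbound2 : 2 * ((|a| : ℤ) : ℝ) * Real.sqrt q - 2 * (q : ℝ) ≤ (b : ℝ))
    (hbound3 : (b : ℝ) ≤ (a : ℝ) ^ 2 / 4 + 2 * (q : ℝ))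
    (hcond :
      -- (2.1) : p ∤ b
      (¬ (p : ℤ) ∣ b) ∨
      -- (2.2) : 2·v_p(b) ≥ m, p ∤ a, and δ = 0 or δ is not a square in ℤ_p
      ((p : ℤ) ^ m ∣ b ^ 2 ∧ ¬ (p : ℤ) ∣ a ∧
        ((b + 2 * (q : ℤ)) ^ 2 - 4 * (q : ℤ) * a ^ 2 = 0 ∨
          ¬ IsSquare (((b + 2 * (q : ℤ)) ^ 2 - 4 * (q : ℤ) * a ^ 2 : ℤ) : ℤ_[p]))) ∨
      -- (2.3) : p^m ∣ b, 2·v_p(a) ≥ m, Δ is a perfect square, plus extra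
      -- conditions when m is even
      ((p : ℤ) ^ m ∣ b ∧ (p : ℤ) ^ m ∣ a ^ 2 ∧
        IsSquare (a ^ 2 - 4 * (b - 2 * (q : ℤ))) ∧
        (Even m → ∀ a' b' : ℤ, a = (p : ℤ) ^ (m / 2) * a' → b = (q : ℤ) * b' →
          ((b' = 2 → p % 4 ≠ 1) ∧ (a' % 2 ≠ b' % 2 → p % 3 ≠ 1)))) ∨
      -- (2.4)
      ((a = 0 ∧ b = 0 ∧ ((Even m ∧ p % 8 ≠ 1) ∨ (Odd m ∧ p ≠ 2))) ∨
       (a = 0 ∧ b = -(q : ℤ) ∧ ((Even m ∧ p % 12 ≠ 1) ∨ (Odd m ∧ p ≠ 3))) ∨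
       (a = 0 ∧ b = (q : ℤ) ∧ Odd m) ∨
       (a = 0 ∧ b = -2 * (q : ℤ) ∧ Odd m) ∨
       (a = 0 ∧ b = 2 * (q : ℤ) ∧ Even m ∧ p % 4 = 1) ∨
       (a ^ 2 = (q : ℤ) ∧ b = (q : ℤ) ∧ Even m ∧ p % 5 ≠ 1) ∨
       (a ^ 2 = 2 * (q : ℤ) ∧ b = (q : ℤ) ∧ Odd m ∧ p = 2) ∨
       (a ^ 2 = 4 * (q : ℤ) ∧ b = 3 * (q : ℤ) ∧ Even m ∧ p % 3 = 1) ∨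
       (a ^ 2 = 5 * (q : ℤ) ∧ b = 3 * (q : ℤ) ∧ Odd m ∧ p = 5))) :
    (q : ℤ) ^ 2 ∣ 1 + a + b + a * (q : ℤ) + (q : ℤ) ^ 2 ↔
      ((a = 1 ∧ b = -(q : ℤ) - 2 ∧ Odd q ∧ 8 < q) ∨
       (a = 0 ∧ b = -1) ∨
       (a = -1 ∧ b = (q : ℤ) ∧ (Odd m ∨ p % 4 ≠ 1)) ∨
       (a = -2 ∧ b = 2 * (q : ℤ) + 1) ∨
       (q = 13 ∧ a = 9 ∧ b = 42) ∨
       (q = 9 ∧ a = 6 ∧ b = 20) ∨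
       (q = 7 ∧ a = 4 ∧ b = 16) ∨
       (q = 5 ∧ a = 3 ∧ b = 6) ∨ (q = 5 ∧ a = 8 ∧ b = 26) ∨
       (q = 4 ∧ a = 2 ∧ b = 5) ∨ (q = 4 ∧ a = 4 ∧ b = 11) ∨ (q = 4 ∧ a = 6 ∧ b = 17) ∨
       (q = 3 ∧ a = 1 ∧ b = 4) ∨ (q = 3 ∧ a = 3 ∧ b = 5) ∨ (q = 3 ∧ a = 4 ∧ b = 10) ∨
       (q = 2 ∧ a = 0 ∧ b = 3) ∨ (q = 2 ∧ a = 1 ∧ b = 0) ∨ (q = 2 ∧ a = 1 ∧ b = 4) ∨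
       (q = 2 ∧ a = 2 ∧ b = 5) ∨ (q = 2 ∧ a = 3 ∧ b = 6)) := by
  rw [Int.cast_abs] at hbound1 hbound2
  have h_weil : WeilBounds q a b := weilBounds_iff_sqrt.mpr ⟨hbound1, hbound2, hbound3⟩
  refine (stmt_0_general (by omega) hq h_weil ?_).trans (by simp [sporadicTriples, or_assoc])
  have hqz : (q : ℤ) = p ^ m := by simp [hq]
  have h_dvd (h : (q : ℤ) ∣ a ^ 2) : (p : ℤ) ∣ a := dvd_of_pow_dvd_sq (by omega) (hqz ▸ h)
  rw [← hqz] at hcond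
  rcases hcond with h | ⟨h, -, hδ⟩ | ⟨-, h, -⟩ |
    ⟨h, -⟩ | ⟨h, -⟩ | ⟨h, -⟩ | ⟨h, -⟩ | ⟨h, -⟩ | ⟨h, -⟩ | ⟨h, -⟩ | ⟨h, -⟩ | ⟨h, -⟩
  · exact .inl h
  · exact .inr (.inl ⟨h, hδ⟩)
  · exact .inr (.inr (h_dvd h))
  all_goals exact .inr (.inr (h_dvd (by simp [h])))
end

section
/- If q is a prime power (q = p^m with p prime and m ≥ 1), then 8q + 4 is a perfect square if and only if q = 4. -/
/-!
If `8 * q + 4 = 2 ^ 2 * (2 * q + 1)` is a square, then so is the odd number `2 * q + 1`, and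
writing its root as `2 * k + 1` gives `q = 2 * (k * (k + 1))`. When `q` is a prime power, its
divisors form a chain under divisibility, so one of the coprime divisors `k` and `k + 1` is `1`.
As `q ≠ 0`, this forces `k = 1`, and hence `q = 4`.
-/

section PrimePow

variable {M : Type*} [CommMonoidWithZero M] [IsCancelMulZero M] {p a b : M} {m : ℕ}

lemma dvd_or_dvd_of_dvd_prime_pow (hp : Prime p) (ha : a ∣ p ^ m) (hb : b ∣ p ^ m) :
    a ∣ b ∨ b ∣ a := by
  obtain ⟨i, -, hai⟩ := (dvd_prime_pow hp m).1 ha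
  obtain ⟨j, -, hbj⟩ := (dvd_prime_pow hp m).1 hb
  rcases le_total i j with hij | hji
  · exact .inl (hai.dvd.trans ((pow_dvd_pow p hij).trans hbj.dvd'))
  · exact .inr (hbj.dvd.trans ((pow_dvd_pow p hji).trans hai.dvd'))

lemma isUnit_or_isUnit_of_isRelPrime_of_dvd_prime_pow (hp : Prime p) (hab : IsRelPrime a b)
    (ha : a ∣ p ^ m) (hb : b ∣ p ^ m) : IsUnit a ∨ IsUnit b :=
  (dvd_or_dvd_of_dvd_prime_pow hp ha hb).imp hab.isUnit_of_dvd hab.symm.isUnit_of_dvd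

end PrimePow

lemma eq_one_of_dvd_prime_pow_of_succ_dvd_prime_pow {p k m : ℕ} (hp : p.Prime)
    (hk : k ∣ p ^ m) (hk_succ : k + 1 ∣ p ^ m) : k = 1 := by
  have hrel : IsRelPrime k (k + 1) := Nat.coprime_iff_isRelPrime.1 (by simp)
  have hk_ne_zero : k ≠ 0 := ne_zero_of_dvd_ne_zero (pow_ne_zero m hp.ne_zero) hk
  simpa [hk_ne_zero] using
    isUnit_or_isUnit_of_isRelPrime_of_dvd_prime_pow hp.prime hrel hk hk_succ

lemma isSquare_sq_mul_iff {M : Type*} [CommMonoidWithZero M] [UniqueFactorizationMonoid M]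
    {a b : M} (ha : a ≠ 0) : IsSquare (a ^ 2 * b) ↔ IsSquare b := by
  refine ⟨fun h ↦ ?_, (IsSquare.sq a).mul⟩
  obtain ⟨r, hr⟩ := (isSquare_iff_exists_sq _).1 h
  obtain ⟨s, rfl⟩ : a ∣ r :=
    (UniqueFactorizationMonoid.pow_dvd_pow_iff_dvd two_ne_zero).1 (Dvd.intro b hr)
  rw [mul_pow] at hr
  exact (isSquare_iff_exists_sq b).2 ⟨s, mul_left_cancel₀ (pow_ne_zero 2 ha) hr⟩

lemma isSquare_two_mul_add_one_iff {n : ℕ} :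
    IsSquare (2 * n + 1) ↔ ∃ k, n = 2 * (k * (k + 1)) := by
  constructor
  · rintro ⟨r, hr⟩
    have hodd : Odd (r * r) := hr ▸ odd_two_mul_add_one n
    obtain ⟨k, rfl⟩ := (Nat.odd_mul.1 hodd).1
    exact ⟨k, by linarith⟩
  · rintro ⟨k, rfl⟩
    exact ⟨2 * k + 1, by ring⟩

/-- If q = p^m is a prime power (p prime, m ≥ 1), then 8q + 4 is a
perfect square if and only if q = 4. -/
theorem stmt_6 (p m : ℕ) (hp : p.Prime) (hm : 1 ≤ m) (q : ℕ) (hq : q = p ^ m) :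
    IsSquare (8 * q + 4) ↔ q = 4 := by
  have hfactor : 8 * q + 4 = 2 ^ 2 * (2 * q + 1) := by ring
  rw [hfactor, isSquare_sq_mul_iff two_ne_zero, isSquare_two_mul_add_one_iff]
  constructor
  · rintro ⟨k, hk⟩
    have hdvd : k * (k + 1) ∣ p ^ m := hq ▸ Dvd.intro_left 2 hk.symm
    obtain rfl : k = 1 := eq_one_of_dvd_prime_pow_of_succ_dvd_prime_pow hp
      (dvd_of_mul_right_dvd hdvd) (dvd_of_mul_left_dvd hdvd)
    exact hk
  · rintro rfl
    exact ⟨1, rfl⟩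
end

section
/- Let p be an odd prime, m ≥ 1 an integer, and q = p^m. Then 9q² − 4q is nonzero, and 9q² − 4q is a square in the ring ℤ_p of p-adic integers if and only if m is even and p ≡ 1 (mod 4). -/
/-! With `q = p ^ m` we have `9 q² - 4 q = p ^ m * (9 p ^ m - 4)`, whose second factor reduces to
`-4` modulo `p`. Hence `p` divides the product exactly `m` times, and Hensel's lemma reduces the
question whether the second factor is a square to whether `-4`, equivalently `-1`, is a square
modulo `p`. -/

open Polynomial in
theorem isSquare_map_iff_of_henselianRing {R S : Type*} [CommRing R] [CommRing S] {f : R →+* S}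
    [HenselianRing R (RingHom.ker f)] (hf : Function.Surjective f) (h2 : IsUnit (2 : S))
    {u : R} (hu : IsUnit (f u)) : IsSquare (f u) ↔ IsSquare u := by
  refine ⟨?_, fun h ↦ h.map f⟩
  rintro ⟨s, hs⟩
  obtain ⟨a, rfl⟩ := hf s
  have hroot : (X ^ 2 - C u).eval a ∈ RingHom.ker f := by
    simp [RingHom.mem_ker, hs, sq]
  have hsimple : IsUnit (Ideal.Quotient.mk (RingHom.ker f) ((X ^ 2 - C u).derivative.eval a)) := by
    have ha : IsUnit (f a) := isUnit_of_mul_isUnit_left (hs ▸ hu)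
    rw [← isUnit_map_iff (RingHom.quotientKerEquivOfSurjective hf)]
    simpa [one_add_one_eq_two, map_ofNat] using h2.mul ha
  obtain ⟨r, hr, -⟩ :=
    HenselianRing.is_henselian _ (monic_X_pow_sub_C u two_ne_zero) a hroot hsimple
  have hru : r ^ 2 = u := by simpa [sub_eq_zero] using hr
  exact hru ▸ IsSquare.sq r

theorem isSquare_prime_pow_mul_iff {M : Type*} [CommMonoidWithZero M] [IsCancelMulZero M]
    {p u : M} (hp : Prime p) (hu : ¬p ∣ u) (m : ℕ) :
    IsSquare (p ^ m * u) ↔ Even m ∧ IsSquare u := by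
  refine ⟨?_, fun ⟨hm, husq⟩ ↦ (hm.isSquare_pow p).mul husq⟩
  rintro ⟨r, hr⟩
  have hmult : emultiplicity p r + emultiplicity p r = m := by
    rw [← emultiplicity_mul hp, ← hr, emultiplicity_mul hp, emultiplicity_pow_self_of_prime hp,
      emultiplicity_eq_zero.mpr hu, add_zero]
  have hfin : FiniteMultiplicity p r := by
    rw [finiteMultiplicity_iff_emultiplicity_ne_top]
    intro htop
    simp [htop] at hmult
  obtain ⟨s, hs⟩ := pow_multiplicity_dvd p r
  have hm : multiplicity p r + multiplicity p r = m := by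
    rw [hfin.emultiplicity_eq_multiplicity] at hmult
    exact_mod_cast hmult
  refine ⟨⟨_, hm.symm⟩, s, mul_left_cancel₀ (pow_ne_zero m hp.ne_zero) ?_⟩
  calc p ^ m * u = (p ^ multiplicity p r * s) * (p ^ multiplicity p r * s) := by rw [hr, ← hs]
    _ = p ^ m * (s * s) := by rw [mul_mul_mul_comm, ← pow_add, hm]

theorem isSquare_mul_sq_iff_of_isUnit {M : Type*} [CommMonoid M] {b : M} (hb : IsUnit b) (a : M) :
    IsSquare (a * b ^ 2) ↔ IsSquare a := by
  refine ⟨?_, fun h ↦ h.mul (IsSquare.sq b)⟩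
  rintro ⟨r, hr⟩
  obtain ⟨b, rfl⟩ := hb
  refine ⟨r * ↑b⁻¹, ?_⟩
  rw [mul_mul_mul_comm, ← hr, ← sq, mul_assoc, ← mul_pow, Units.mul_inv, one_pow, mul_one]

theorem isUnit_two_zmod_of_odd {n : ℕ} (hn : Odd n) : IsUnit (2 : ZMod n) := by
  exact_mod_cast (ZMod.isUnit_iff_coprime 2 n).mpr hn.coprime_two_left

section Padic

variable {p : ℕ} [Fact p.Prime]

theorem isSquare_toZMod_iff (hodd : Odd p) {u : ℤ_[p]} (hu : PadicInt.toZMod u ≠ 0) :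
    IsSquare (PadicInt.toZMod u) ↔ IsSquare u := by
  have : HenselianRing ℤ_[p] (RingHom.ker (PadicInt.toZMod (p := p))) := by
    rw [PadicInt.ker_toZMod]
    infer_instance
  exact isSquare_map_iff_of_henselianRing (ZMod.ringHom_surjective _)
    (isUnit_two_zmod_of_odd hodd) hu.isUnit

theorem isSquare_padicInt_p_pow_mul_iff (hodd : Odd p) {u : ℤ_[p]} (hu : PadicInt.toZMod u ≠ 0)
    (m : ℕ) :
    IsSquare ((p : ℤ_[p]) ^ m * u) ↔ Even m ∧ IsSquare (PadicInt.toZMod u) := by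
  have hpu : ¬(p : ℤ_[p]) ∣ u := fun h ↦ hu <| by simpa using map_dvd PadicInt.toZMod h
  rw [isSquare_prime_pow_mul_iff PadicInt.prime_p hpu, isSquare_toZMod_iff hodd hu]

theorem isSquare_neg_one_mul_sq_iff_mod_four_eq_one (hodd : Odd p) {b : ZMod p} (hb : b ≠ 0) :
    IsSquare (-1 * b ^ 2) ↔ p % 4 = 1 := by
  rw [isSquare_mul_sq_iff_of_isUnit hb.isUnit, ZMod.exists_sq_eq_neg_one_iff]
  have : p % 2 = 1 := Nat.odd_iff.mp hodd
  lia

end Padic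

/-- Let p be an odd prime, m ≥ 1, q = p^m. Then 9q² − 4q ≠ 0, and
9q² − 4q is a square in ℤ_p if and only if m is even and p ≡ 1 (mod 4). -/
theorem stmt_9 (p : ℕ) [hp : Fact p.Prime] (hodd : Odd p) (m : ℕ) (hm : 1 ≤ m)
    (q : ℕ) (hq : q = p ^ m) :
    (9 * (q : ℤ) ^ 2 - 4 * (q : ℤ) ≠ 0) ∧
      (IsSquare ((9 * (q : ℤ) ^ 2 - 4 * (q : ℤ) : ℤ) : ℤ_[p]) ↔
        (Even m ∧ p % 4 = 1)) := by
  have hfactor : 9 * (q : ℤ) ^ 2 - 4 * (q : ℤ) = q * (9 * q - 4) := by ring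
  have htwo : (2 : ZMod p) ≠ 0 := (isUnit_two_zmod_of_odd hodd).ne_zero
  have hresidue : PadicInt.toZMod (9 * (p : ℤ_[p]) ^ m - 4) = -1 * 2 ^ 2 := by
    simp only [map_sub, map_mul, map_pow, map_natCast, map_ofNat, CharP.cast_eq_zero,
      zero_pow (Nat.one_le_iff_ne_zero.mp hm)]
    ring
  have hresidue_ne_zero : PadicInt.toZMod (9 * (p : ℤ_[p]) ^ m - 4) ≠ 0 :=
    hresidue ▸ mul_ne_zero (neg_ne_zero.mpr one_ne_zero) (pow_ne_zero 2 htwo)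
  rw [hfactor]
  constructor
  · have hq0 : (q : ℤ) ≠ 0 := by exact_mod_cast hq ▸ pow_ne_zero m hp.out.ne_zero
    exact mul_ne_zero hq0 (by lia)
  · rw [← isSquare_neg_one_mul_sq_iff_mod_four_eq_one hodd htwo, ← hresidue,
      ← isSquare_padicInt_p_pow_mul_iff hodd hresidue_ne_zero]
    simp [hq]
end

section
/- Let q be an odd positive integer. Then there do not exist integers s and t with X⁴ + X³ − (q+2)X² + qX + q² = (X² − sX + q)(X² − tX + q) in ℤ[X]. -/
open Polynomial

/-!
Modulo 2, for odd `q`, the quartic is `X⁴ + X³ + X² + X + 1 = Φ₅`. Since 2 is a primitive root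
modulo 5, `Φ₅` is irreducible over `𝔽₂`, and a monic integer polynomial which is irreducible modulo
a prime is irreducible over `ℤ`.
-/

theorem not_irreducible_mul_of_natDegree_pos {R : Type*} [Semiring R] [NoZeroDivisors R]
    {f g : R[X]} (hf : 0 < f.natDegree) (hg : 0 < g.natDegree) : ¬ Irreducible (f * g) :=
  fun h ↦ (h.isUnit_or_isUnit rfl).elim
    (not_isUnit_of_natDegree_pos f hf) (not_isUnit_of_natDegree_pos g hg)

theorem natDegree_X_sq_sub_C_mul_X_add_C {R : Type*} [Ring R] [Nontrivial R] (s a : R) :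
    (X ^ 2 - C s * X + C a).natDegree = 2 := by
  compute_degree!

theorem cyclotomic_five (R : Type*) [Ring R] :
    cyclotomic 5 R = X ^ 4 + X ^ 3 + X ^ 2 + X + 1 := by
  have : Fact (Nat.Prime 5) := ⟨Nat.prime_five⟩
  simp only [cyclotomic_prime, Finset.sum_range_succ, Finset.sum_range_zero]
  noncomm_ring

theorem irreducible_cyclotomic_zmod_of_orderOf_eq_totient {p n : ℕ} [Fact p.Prime]
    (hpn : ¬ p ∣ n) (hord : orderOf (p : ZMod n) = n.totient) :
    Irreducible (cyclotomic n (ZMod p)) := by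
  refine ZMod.irreducible_of_dvd_cyclotomic_of_natDegree hpn dvd_rfl ?_
  rw [natDegree_cyclotomic, ← hord, ← orderOf_units, ZMod.coe_unitOfCoprime]

theorem orderOf_two_zmod_five : orderOf (2 : ZMod 5) = 4 :=
  orderOf_eq_prime_pow (p := 2) (n := 1) (by decide) (by decide)

theorem irreducible_cyclotomic_five_zmod_two : Irreducible (cyclotomic 5 (ZMod 2)) :=
  irreducible_cyclotomic_zmod_of_orderOf_eq_totient (by decide) orderOf_two_zmod_five

theorem map_weil_quartic_eq_cyclotomic_five {q : ℤ} (hodd : Odd q) :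
    (X ^ 4 + X ^ 3 - C (q + 2) * X ^ 2 + C q * X + C (q ^ 2) : ℤ[X]).map
      (Int.castRingHom (ZMod 2)) = cyclotomic 5 (ZMod 2) := by
  have hq : (q : ZMod 2) = 1 := hodd.intCast_zmod_two
  have hcoeff : (1 : ZMod 2) + 2 = -1 := by decide
  calc
    _ = X ^ 4 + X ^ 3 - C ((q : ZMod 2) + 2) * X ^ 2 + C (q : ZMod 2) * X
          + C ((q : ZMod 2) ^ 2) := by
      simp only [Polynomial.map_add, Polynomial.map_sub, Polynomial.map_mul, Polynomial.map_pow,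
        map_X, map_C, eq_intCast (Int.castRingHom (ZMod 2)), Int.cast_add, Int.cast_pow,
        Int.cast_ofNat]
    _ = X ^ 4 + X ^ 3 - C (-1) * X ^ 2 + C 1 * X + C 1 := by rw [hq, hcoeff, one_pow]
    _ = X ^ 4 + X ^ 3 + X ^ 2 + X + 1 := by
      rw [C_neg, C_1]
      ring
    _ = cyclotomic 5 (ZMod 2) := (cyclotomic_five _).symm

theorem stmt_11_general {q : ℤ} (hodd : Odd q) :
    Irreducible (X ^ 4 + X ^ 3 - C (q + 2) * X ^ 2 + C q * X + C (q ^ 2) : ℤ[X]) := by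
  refine Monic.irreducible_of_irreducible_map (Int.castRingHom (ZMod 2)) _ (by monicity!) ?_
  rw [map_weil_quartic_eq_cyclotomic_five hodd]
  exact irreducible_cyclotomic_five_zmod_two

/-- Let q be an odd positive integer. Then there do not exist
integers s and t with
X⁴ + X³ − (q+2)X² + qX + q² = (X² − sX + q)(X² − tX + q) in ℤ[X]. -/
theorem stmt_11 (q : ℕ) (hpos : 0 < q) (hodd : Odd q) :
    ¬ ∃ s t : ℤ,
        (X ^ 4 + X ^ 3 - C ((q : ℤ) + 2) * X ^ 2 + C (q : ℤ) * X + C ((q : ℤ) ^ 2) : ℤ[X]) =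
          (X ^ 2 - C s * X + C (q : ℤ)) * (X ^ 2 - C t * X + C (q : ℤ)) := by
  rintro ⟨s, t, h⟩
  have hquad (u : ℤ) : 0 < (X ^ 2 - C u * X + C (q : ℤ)).natDegree :=
    (natDegree_X_sq_sub_C_mul_X_add_C u (q : ℤ)).symm ▸ two_pos
  exact not_irreducible_mul_of_natDegree_pos (hquad s) (hquad t)
    (h ▸ stmt_11_general hodd.natCast)
end
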